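/- Let d ≥ 2, let A : ℝ^d → ℝ^d be smooth and set B_{jk} := ∂_j A_k − ∂_k A_j. For R > 0 define μ(R) as the infimum, over all smooth g : ℝ^d → ℂ not identically zero on the open ball D_R, of (∫_{D_R} |∇g(x) − iA(x)g(x)|² |x|^{−(d−2)} dx) / (∫_{D_R} |g(x)|² |x|^{−(d−2)} dx). Then μ(R) = 0 for every R > 0 if and only if B is identically zero on ℝ^d. -/

import Mathlib

open MeasureTheory Real

/-- The magnetic energy density `|∇g(x) − iA(x)g(x)|²`. -/
noncomputable def magEnergy (d : ℕ)
    (A : EuclideanSpace ℝ (Fin d) → EuclideanSpace ℝ (Fin d))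
    (g : EuclideanSpace ℝ (Fin d) → ℂ) (x : EuclideanSpace ℝ (Fin d)) : ℝ :=
  ∑ j, ‖fderiv ℝ g x (EuclideanSpace.single j (1:ℝ)) - Complex.I * (A x j : ℝ) * g x‖ ^ 2

/-- The lowest magnetic Neumann-type Rayleigh quotient on the ball of radius `R`
with weight `|x|^{-(d-2)}`. -/
noncomputable def muB (d : ℕ)
    (A : EuclideanSpace ℝ (Fin d) → EuclideanSpace ℝ (Fin d)) (R : ℝ) : ℝ :=
  sInf {q : ℝ | ∃ g : EuclideanSpace ℝ (Fin d) → ℂ, ContDiff ℝ (⊤ : ℕ∞) g ∧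
    (∃ x ∈ Metric.ball (0 : EuclideanSpace ℝ (Fin d)) R, g x ≠ 0) ∧
    q = (∫ x in Metric.ball (0 : EuclideanSpace ℝ (Fin d)) R,
          magEnergy d A g x * ‖x‖ ^ (-((d:ℝ) - 2)))
        / ∫ x in Metric.ball (0 : EuclideanSpace ℝ (Fin d)) R,
            ‖g x‖^2 * ‖x‖ ^ (-((d:ℝ) - 2))}

/-
If `B = 0` then `A = ∇φ`, and the phase `exp (iφ)` is annihilated by `∇ - iA`.

Conversely, let `B_{jk}(x₀) ≠ 0`. The commutator of two components of `∇ - iA` is multiplication by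
`-iB_{jk}`; in terms of the current `J_k = Re ⟪ig, (∂_k - iA_k)g⟫` this reads
`∂_j J_k - ∂_k J_j = 2 Re ⟪i(∂_j - iA_j)g, (∂_k - iA_k)g⟫ - B_{jk}|g|²`. Multiplying by a cutoff and
integrating by parts bounds `∫ |g|²` near `x₀` by the energy plus an arbitrarily small multiple of
`∫ |g|²` over a slightly larger ball. By the diamagnetic inequality `∇|g|²` is controlled by
`|g|² + |(∇ - iA)g|²`, so Grönwall's inequality along segments to `x₀` bounds `∫ |g|²` over a ball
containing `x₀` by the integral near `x₀` plus the energy, and the small multiple is absorbed.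

For the weight `|x|^p`, `-d < p ≤ 0`, the same inequality is applied along the dilations
`x ↦ t x`, `1 ≤ t ≤ σ`. They multiply the weighted measure by `t ^ (-(d + p))`, so for `σ` large the
weighted norm over the ball of radius `R / σ` is a small multiple of that over the ball of
radius `R`, plus weighted energy; away from the origin the weight is bounded.
-/

open Module Metric Set
open scoped NNReal

section MeasureComparison

variable {X Y : Type*} [MeasurableSpace X] [MeasurableSpace Y] {ν : Measure X} {ν' : Measure Y}

lemma map_restrict_le_smul_restrict {h : X → Y} (hh : Measurable h) {S : Set X} {T : Set Y}
    (hT : MeasurableSet T) (hST : MapsTo h S T) {C : ℝ≥0} (hmap : ν.map h ≤ C • ν') :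
    (ν.restrict S).map h ≤ C • ν'.restrict T :=
  calc (ν.restrict S).map h ≤ (ν.restrict (h ⁻¹' T)).map h :=
        Measure.map_mono (Measure.restrict_mono hST le_rfl) hh
    _ = (ν.map h).restrict T := (Measure.restrict_map hh hT).symm
    _ ≤ (C • ν').restrict T := Measure.restrict_mono subset_rfl hmap
    _ = C • ν'.restrict T := Measure.restrict_smul C ν' T

lemma setIntegral_comp_le_of_map_le {h : X → Y} (hh : Measurable h) {S : Set X} {T : Set Y}
    (hT : MeasurableSet T) (hST : MapsTo h S T) {C : ℝ≥0} (hmap : ν.map h ≤ C • ν')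
    {f : Y → ℝ} (hf : IntegrableOn f T ν') (hf0 : 0 ≤ f) :
    ∫ x in S, f (h x) ∂ν ≤ C * ∫ y in T, f y ∂ν' := by
  have hle := map_restrict_le_smul_restrict hh hT hST hmap
  have hfC : Integrable f (C • ν'.restrict T) := hf.smul_measure_nnreal
  calc ∫ x in S, f (h x) ∂ν = ∫ y, f y ∂(ν.restrict S).map h :=
        (integral_map hh.aemeasurable (hfC.mono_measure hle).aestronglyMeasurable).symm
    _ ≤ ∫ y, f y ∂(C • ν'.restrict T) :=
        integral_mono_measure hle (Filter.Eventually.of_forall hf0) hfC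
    _ = C * ∫ y in T, f y ∂ν' := by rw [integral_smul_nnreal_measure, NNReal.smul_def, smul_eq_mul]

end MeasureComparison

section Bounded

variable {X : Type*} [MetricSpace X] [ProperSpace X] [MeasurableSpace X] [BorelSpace X]
  {ν : Measure X} [IsLocallyFiniteMeasure ν]

lemma integrableOn_of_continuous_of_isBounded {f : X → ℝ} (hf : Continuous f)
    {S : Set X} (hS : Bornology.IsBounded S) : IntegrableOn f S ν :=
  (hf.continuousOn.integrableOn_compact hS.isCompact_closure).mono_set subset_closure

lemma setIntegral_pos_of_isOpen_of_continuous [ν.IsOpenPosMeasure] {f : X → ℝ} (hf : Continuous f)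
    (hf0 : 0 ≤ f) {U : Set X} (hU : IsOpen U) (hUb : Bornology.IsBounded U)
    (hne : ∃ x ∈ U, f x ≠ 0) : 0 < ∫ x in U, f x ∂ν := by
  obtain ⟨x, hxU, hfx⟩ := hne
  rw [setIntegral_pos_iff_support_of_nonneg_ae (Filter.Eventually.of_forall hf0)
    (integrableOn_of_continuous_of_isBounded hf hUb)]
  exact (hf.isOpen_support.inter hU).measure_pos ν ⟨x, hfx, hxU⟩

lemma setIntegral_intervalIntegral_comp_le_of_map_le {h : ℝ → X → X}
    (hh : Continuous (Function.uncurry h)) {S T : Set X} (hS : Bornology.IsBounded S)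
    (hT : Bornology.IsBounded T) (hTm : MeasurableSet T)
    (hST : ∀ t ∈ Icc (0 : ℝ) 1, MapsTo (h t) S T) {C : ℝ≥0}
    (hmap : ∀ t ∈ Icc (0 : ℝ) 1, ν.map (h t) ≤ C • ν) {f : X → ℝ} (hf : Continuous f)
    (hf0 : 0 ≤ f) :
    ∫ x in S, (∫ t in (0 : ℝ)..1, f (h t x)) ∂ν ≤ C * ∫ x in T, f x ∂ν := by
  have hswap : IntegrableOn (Function.uncurry fun t x => f (h t x)) (uIoc (0 : ℝ) 1 ×ˢ S)
      (volume.prod ν) :=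
    integrableOn_of_continuous_of_isBounded (hf.comp hh) ((isBounded_Ioc _ _).prod hS)
  rw [IntegrableOn, ← Measure.prod_restrict] at hswap
  rw [← intervalIntegral_integral_swap hswap]
  calc ∫ t in (0 : ℝ)..1, ∫ x in S, f (h t x) ∂ν
      ≤ ∫ _ in (0 : ℝ)..1, C * ∫ x in T, f x ∂ν := by
        refine intervalIntegral.integral_mono_on zero_le_one
          (intervalIntegrable_iff.2 hswap.integral_prod_left) intervalIntegrable_const fun t ht =>
          setIntegral_comp_le_of_map_le (by fun_prop) hTm (hST t ht) (hmap t ht)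
          (integrableOn_of_continuous_of_isBounded hf hT) hf0
    _ = C * ∫ x in T, f x ∂ν := by simp

end Bounded

section NormRpow

variable {E : Type*} [NormedAddCommGroup E] [MeasurableSpace E]

/-- The measure `|x|^p dμ`, which turns weighted integrals into integrals over balls and makes
homotheties centred at `0` scale them by a constant. -/
noncomputable def normRpowMeasure (μ : Measure E) (p : ℝ) : Measure E :=
  μ.withDensity fun x => ENNReal.ofReal (‖x‖ ^ p)

variable [BorelSpace E] {μ : Measure E} {p : ℝ}

lemma setIntegral_normRpowMeasure {S : Set E} (hS : MeasurableSet S) (f : E → ℝ) :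
    ∫ x in S, f x ∂normRpowMeasure μ p = ∫ x in S, f x * ‖x‖ ^ p ∂μ := by
  rw [normRpowMeasure, restrict_withDensity hS, integral_withDensity_eq_integral_toReal_smul
    (by fun_prop) (Filter.Eventually.of_forall fun _ => ENNReal.ofReal_lt_top)]
  refine integral_congr_ae (Filter.Eventually.of_forall fun x => ?_)
  simp only [ENNReal.toReal_ofReal (Real.rpow_nonneg (norm_nonneg x) p), smul_eq_mul, mul_comm]

lemma integrableOn_normRpowMeasure_iff {S : Set E} (hS : MeasurableSet S) {f : E → ℝ} :
    IntegrableOn f S (normRpowMeasure μ p) ↔ IntegrableOn (fun x => f x * ‖x‖ ^ p) S μ := by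
  rw [normRpowMeasure, IntegrableOn, IntegrableOn, restrict_withDensity hS,
    integrable_withDensity_iff (by fun_prop)
      (Filter.Eventually.of_forall fun _ => ENNReal.ofReal_lt_top)]
  simp only [ENNReal.toReal_ofReal (Real.rpow_nonneg (norm_nonneg _) p)]

lemma isOpenPosMeasure_normRpowMeasure [NullSingletonClass μ] [μ.IsOpenPosMeasure] (p : ℝ) :
    (normRpowMeasure μ p).IsOpenPosMeasure := by
  refine (withDensity_absolutelyContinuous' (μ := μ) (by fun_prop) ?_).isOpenPosMeasure
  filter_upwards [Measure.ae_ne μ 0] with x hx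
  exact (ENNReal.ofReal_pos.2 (Real.rpow_pos_of_pos (norm_pos_iff.2 hx) p)).ne'

variable [ProperSpace E] [IsLocallyFiniteMeasure μ] [IsLocallyFiniteMeasure (normRpowMeasure μ p)]
  {f : E → ℝ} {R : ℝ}

lemma setIntegral_ball_le_rpow_mul_setIntegral_normRpowMeasure [NullSingletonClass μ]
    (hp : p ≤ 0) (hf : Continuous f) (hf0 : 0 ≤ f) :
    ∫ x in ball 0 R, f x ∂μ ≤ R ^ (-p) * ∫ x in ball 0 R, f x ∂normRpowMeasure μ p := by
  have hint := (integrableOn_normRpowMeasure_iff measurableSet_ball).1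
    (integrableOn_of_continuous_of_isBounded (ν := normRpowMeasure μ p) hf
      (isBounded_ball (x := 0) (r := R)))
  rw [setIntegral_normRpowMeasure measurableSet_ball, ← integral_const_mul]
  refine integral_mono_ae (integrableOn_of_continuous_of_isBounded hf isBounded_ball)
    (hint.const_mul _) ?_
  filter_upwards [ae_restrict_mem measurableSet_ball, ae_restrict_of_ae (Measure.ae_ne μ 0)]
    with x hx hx0
  have hxpos : 0 < ‖x‖ := norm_pos_iff.2 hx0
  have hweight : 1 ≤ R ^ (-p) * ‖x‖ ^ p :=
    calc 1 = ‖x‖ ^ (-p) * ‖x‖ ^ p := by rw [← rpow_add hxpos, neg_add_cancel, rpow_zero]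
      _ ≤ R ^ (-p) * ‖x‖ ^ p := by
        gcongr
        · linarith
        · exact (mem_ball_zero_iff.1 hx).le
  have hfx : 0 ≤ f x := hf0 x
  linear_combination f x * hweight

lemma setIntegral_ball_normRpowMeasure_le_add (hp : p ≤ 0) {r : ℝ} (hr : 0 < r)
    (hf : Continuous f) (hf0 : 0 ≤ f) :
    ∫ x in ball 0 R, f x ∂normRpowMeasure μ p
      ≤ ∫ x in ball 0 r, f x ∂normRpowMeasure μ p + r ^ p * ∫ x in ball 0 R, f x ∂μ := by
  have hintW : ∀ s, IntegrableOn f (ball 0 s) (normRpowMeasure μ p) := fun s =>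
    integrableOn_of_continuous_of_isBounded hf isBounded_ball
  have hint : IntegrableOn f (ball 0 R) μ :=
    integrableOn_of_continuous_of_isBounded hf isBounded_ball
  rw [← integral_inter_add_sdiff (measurableSet_ball (x := 0) (ε := r)) (hintW R)]
  refine add_le_add (setIntegral_mono_set (hintW r) (Filter.Eventually.of_forall hf0)
    inter_subset_right.eventuallyLE) ?_
  have hmeas : MeasurableSet (ball (0 : E) R \ ball 0 r) :=
    measurableSet_ball.diff measurableSet_ball
  calc ∫ x in ball 0 R \ ball 0 r, f x ∂normRpowMeasure μ p
      = ∫ x in ball 0 R \ ball 0 r, f x * ‖x‖ ^ p ∂μ := setIntegral_normRpowMeasure hmeas f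
    _ ≤ ∫ x in ball 0 R \ ball 0 r, r ^ p * f x ∂μ := by
        refine setIntegral_mono_on ((integrableOn_normRpowMeasure_iff hmeas).1
          ((hintW R).mono_set sdiff_subset)) ((hint.mono_set sdiff_subset).const_mul _) hmeas
          fun x hx => ?_
        rw [mul_comm]
        have hrx : r ≤ ‖x‖ := by simpa using hx.2
        exact mul_le_mul_of_nonneg_right (rpow_le_rpow_of_nonpos hr hrx hp) (hf0 x)
    _ ≤ r ^ p * ∫ x in ball 0 R, f x ∂μ := by
        rw [integral_const_mul]
        exact mul_le_mul_of_nonneg_left (setIntegral_mono_set hint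
          (Filter.Eventually.of_forall hf0) sdiff_subset.eventuallyLE) (by positivity)

end NormRpow

section Homothety

variable {E : Type*} [NormedAddCommGroup E] [NormedSpace ℝ E] [FiniteDimensional ℝ E]
  [MeasurableSpace E] [BorelSpace E] (μ : Measure E) [μ.IsAddHaarMeasure] {s p : ℝ}

lemma isLocallyFiniteMeasure_normRpowMeasure [Nontrivial E] (hp : -(finrank ℝ E : ℝ) < p) :
    IsLocallyFiniteMeasure (normRpowMeasure μ p) := by
  have hint : LocallyIntegrable (fun x : E => ‖x‖ ^ p) μ :=
    locallyIntegrable_of_norm_le_rpow (α := -p) (C := 1) finrank_pos (by linarith)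
      (Filter.Eventually.of_forall fun x => by
        rw [neg_neg, one_mul, Real.norm_of_nonneg (by positivity)])
      (Measurable.aestronglyMeasurable (by fun_prop))
  refine ⟨fun x => ?_⟩
  obtain ⟨U, hU, hUint⟩ := hint x
  refine ⟨U, hU, ?_⟩
  rw [normRpowMeasure, withDensity_apply' _ U]
  exact hUint.lintegral_lt_top

lemma map_homothety_addHaar (hs : 0 < s) (c : E) :
    μ.map (AffineMap.homothety c s) = (s ^ finrank ℝ E)⁻¹.toNNReal • μ := by
  have hcomp : ⇑(AffineMap.homothety c s) = (· + c) ∘ (s • ·) ∘ (· - c) := by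
    ext x
    simp [AffineMap.homothety_apply]
  rw [hcomp, ← Measure.map_map (by fun_prop) (by fun_prop),
    ← Measure.map_map (by fun_prop) (by fun_prop), (measurePreserving_sub_right μ c).map_eq,
    Measure.map_addHaar_smul μ hs.ne', abs_of_pos (by positivity), Measure.map_smul,
    (measurePreserving_add_right μ c).map_eq]
  rfl

lemma map_homothety_zero_normRpowMeasure (hs : 0 < s) (p : ℝ) :
    (normRpowMeasure μ p).map (AffineMap.homothety (0 : E) s)
      = (s ^ (-(finrank ℝ E + p))).toNNReal • normRpowMeasure μ p := by
  have hw : ∀ x : E, ENNReal.ofReal (‖x‖ ^ p)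
      = ENNReal.ofReal (s ^ (-p)) * ENNReal.ofReal (‖AffineMap.homothety (0 : E) s x‖ ^ p) := by
    intro x
    rw [← ENNReal.ofReal_mul (by positivity), AffineMap.homothety_apply, vsub_eq_sub, sub_zero,
      vadd_eq_add, add_zero, norm_smul, Real.norm_of_nonneg hs.le,
      Real.mul_rpow hs.le (norm_nonneg x), ← mul_assoc, ← Real.rpow_add hs, neg_add_cancel,
      Real.rpow_zero, one_mul]
  have hmeas : Measurable (AffineMap.homothety (0 : E) s) :=
    (AffineMap.continuous_of_finiteDimensional _).measurable
  ext T hT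
  calc (normRpowMeasure μ p).map (AffineMap.homothety (0 : E) s) T
      = ∫⁻ x in AffineMap.homothety (0 : E) s ⁻¹' T, ENNReal.ofReal (s ^ (-p))
          * ENNReal.ofReal (‖AffineMap.homothety (0 : E) s x‖ ^ p) ∂μ := by
        rw [Measure.map_apply hmeas hT, normRpowMeasure, withDensity_apply _ (hmeas hT),
          lintegral_congr hw]
    _ = ENNReal.ofReal (s ^ (-p))
          * ∫⁻ x in T, ENNReal.ofReal (‖x‖ ^ p) ∂μ.map (AffineMap.homothety (0 : E) s) := by
        rw [lintegral_const_mul' _ _ ENNReal.ofReal_ne_top,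
          setLIntegral_map hT (f := fun x => ENNReal.ofReal (‖x‖ ^ p)) (by fun_prop) hmeas]
    _ = ENNReal.ofReal (s ^ (-p))
          * (ENNReal.ofReal (s ^ finrank ℝ E)⁻¹ * normRpowMeasure μ p T) := by
        rw [map_homothety_addHaar μ hs, Measure.restrict_smul, normRpowMeasure,
          withDensity_apply _ hT]
        exact congrArg _ (lintegral_smul_measure (R := ℝ≥0) ..)
    _ = ((s ^ (-(finrank ℝ E + p))).toNNReal • normRpowMeasure μ p) T := by
        rw [← mul_assoc, ← ENNReal.ofReal_mul (by positivity), ← Real.rpow_natCast,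
          ← Real.rpow_neg hs.le, ← Real.rpow_add hs, neg_add_rev]
        rfl

end Homothety

section MagneticDerivative

variable {E : Type*} [NormedAddCommGroup E] [NormedSpace ℝ E]

/-- The magnetic derivative `(∇ - iα)g` of `g` for the magnetic potential `α`, where potentials
are encoded as one-forms. -/
noncomputable def magDeriv (α : E → E →L[ℝ] ℝ) (g : E → ℂ) (x : E) : E →L[ℝ] ℂ :=
  fderiv ℝ g x - (α x).smulRight (Complex.I * g x)

/-- The magnetic field `dα`, as a function of a point and two directions. -/
noncomputable def magField (α : E → E →L[ℝ] ℝ) (x v w : E) : ℝ :=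
  fderiv ℝ α x v w - fderiv ℝ α x w v

/-- The magnetic current `Re ⟪ig, (∇ - iα)g⟫` in the direction `v`. -/
noncomputable def magCurrent (α : E → E →L[ℝ] ℝ) (g : E → ℂ) (v x : E) : ℝ :=
  inner ℝ (Complex.I * g x) (magDeriv α g x v)

variable {α : E → E →L[ℝ] ℝ} {g : E → ℂ}

lemma magDeriv_apply (x v : E) :
    magDeriv α g x v = fderiv ℝ g x v - α x v * (Complex.I * g x) := by
  simp [magDeriv]

lemma continuous_magDeriv (hα : Continuous α) (hg : ContDiff ℝ 1 g) :
    Continuous (magDeriv α g) := by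
  have := hg.continuous_fderiv one_ne_zero
  have hgc := hg.continuous
  unfold magDeriv
  fun_prop

lemma continuous_magField (hα : ContDiff ℝ 1 α) (v w : E) :
    Continuous fun x => magField α x v w := by
  have := hα.continuous_fderiv one_ne_zero
  unfold magField
  fun_prop

lemma magField_eq_zero_of_basis {ι : Type*} (b : Basis ι ℝ E) {x : E}
    (h : ∀ i j, magField α x (b i) (b j) = 0) (v w : E) : magField α x v w = 0 := by
  let L : LinearMap.BilinForm ℝ E := (fderiv ℝ α x).toLinearMap₁₂
  have hsymm : L = L.flip := LinearMap.BilinForm.ext_basis b fun i j => sub_eq_zero.1 (h i j)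
  exact sub_eq_zero.2 (LinearMap.congr_fun₂ hsymm v w)

lemma contDiff_magDeriv_apply (hα : ContDiff ℝ 1 α) (hg : ContDiff ℝ 2 g) (v : E) :
    ContDiff ℝ 1 fun x => magDeriv α g x v := by
  have : ContDiff ℝ 1 (fderiv ℝ g) := hg.fderiv_right (by norm_num)
  have hg1 : ContDiff ℝ 1 g := hg.of_le one_le_two
  have hofReal : ContDiff ℝ 1 fun x => (α x v : ℂ) :=
    Complex.ofRealCLM.contDiff.comp (hα.clm_apply contDiff_const)
  simp only [magDeriv_apply]
  fun_prop

lemma contDiff_magCurrent (hα : ContDiff ℝ 1 α) (hg : ContDiff ℝ 2 g) (v : E) :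
    ContDiff ℝ 1 (magCurrent α g v) :=
  (contDiff_const.mul (hg.of_le one_le_two)).inner ℝ (contDiff_magDeriv_apply hα hg v)

lemma inner_magDeriv_apply (x v : E) :
    inner ℝ (g x) (magDeriv α g x v) = inner ℝ (g x) (fderiv ℝ g x v) := by
  simp only [magDeriv_apply, Complex.inner, Complex.mul_re, Complex.mul_im, Complex.sub_re,
    Complex.sub_im, Complex.conj_re, Complex.conj_im, Complex.I_re, Complex.I_im,
    Complex.ofReal_re, Complex.ofReal_im]
  ring

lemma abs_magCurrent_le (v x : E) :
    |magCurrent α g v x| ≤ ‖v‖ * (‖g x‖ * ‖magDeriv α g x‖) :=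
  calc |magCurrent α g v x| ≤ ‖Complex.I * g x‖ * ‖magDeriv α g x v‖ := abs_real_inner_le_norm _ _
    _ ≤ ‖g x‖ * (‖magDeriv α g x‖ * ‖v‖) := by
      rw [norm_mul, Complex.norm_I, one_mul]
      gcongr
      exact (magDeriv α g x).le_opNorm v
    _ = ‖v‖ * (‖g x‖ * ‖magDeriv α g x‖) := by ring

lemma fderiv_magDeriv_apply (hα : ContDiff ℝ 1 α) (hg : ContDiff ℝ 2 g) (x v w : E) :
    fderiv ℝ (fun y => magDeriv α g y v) x w = fderiv ℝ (fderiv ℝ g) x w v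
      - (fderiv ℝ α x w v * (Complex.I * g x) + α x v * (Complex.I * fderiv ℝ g x w)) := by
  have hdα : HasFDerivAt α (fderiv ℝ α x) x := (hα.differentiable one_ne_zero x).hasFDerivAt
  have hdg : HasFDerivAt g (fderiv ℝ g x) x := (hg.differentiable two_ne_zero x).hasFDerivAt
  have hddg : HasFDerivAt (fderiv ℝ g) (fderiv ℝ (fderiv ℝ g) x) x :=
    ((hg.fderiv_right (m := 1) (by norm_num)).differentiable one_ne_zero x).hasFDerivAt
  have hderiv := ((hddg.clm_apply (hasFDerivAt_const v x)).sub
    ((Complex.ofRealCLM.hasFDerivAt.comp x (hdα.clm_apply (hasFDerivAt_const v x))).mul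
      (hdg.const_mul Complex.I)))
  simp only [magDeriv_apply]
  refine (congrArg (fun L : E →L[ℝ] ℂ => L w) hderiv.fderiv).trans ?_
  simp
  ring

lemma magDeriv_magDeriv_sub (hα : ContDiff ℝ 1 α) (hg : ContDiff ℝ 2 g) (x v w : E) :
    magDeriv α (fun y => magDeriv α g y v) x w - magDeriv α (fun y => magDeriv α g y w) x v
      = -(magField α x w v • (Complex.I * g x)) := by
  have hsymm : fderiv ℝ (fderiv ℝ g) x v w = fderiv ℝ (fderiv ℝ g) x w v :=
    hg.contDiffAt.isSymmSndFDerivAt (by simp) v w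
  rw [magDeriv_apply (g := fun y => magDeriv α g y v),
    magDeriv_apply (g := fun y => magDeriv α g y w), fderiv_magDeriv_apply hα hg,
    fderiv_magDeriv_apply hα hg, hsymm, magField]
  simp only [magDeriv_apply, Complex.real_smul, Complex.ofReal_sub]
  ring

lemma fderiv_magCurrent (hα : ContDiff ℝ 1 α) (hg : ContDiff ℝ 2 g) (x v w : E) :
    fderiv ℝ (magCurrent α g v) x w
      = inner ℝ (Complex.I * magDeriv α g x w) (magDeriv α g x v)
        + inner ℝ (Complex.I * g x) (magDeriv α (fun y => magDeriv α g y v) x w) := by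
  have hdg : DifferentiableAt ℝ g x := hg.differentiable two_ne_zero x
  have hD : DifferentiableAt ℝ (fun y => magDeriv α g y v) x :=
    (contDiff_magDeriv_apply hα hg v).differentiable one_ne_zero x
  have hleibniz : fderiv ℝ (magCurrent α g v) x w
      = inner ℝ (Complex.I * g x) (fderiv ℝ (fun y => magDeriv α g y v) x w)
        + inner ℝ (Complex.I * fderiv ℝ g x w) (magDeriv α g x v) := by
    refine (fderiv_inner_apply ℝ (hdg.const_mul Complex.I) hD w).trans ?_
    rw [fderiv_const_mul hdg]
    rfl
  rw [hleibniz, magDeriv_apply (g := g) x w, magDeriv_apply (g := fun y => magDeriv α g y v)]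
  simp only [Complex.inner, Complex.mul_re, Complex.mul_im, Complex.sub_re,
    Complex.sub_im, Complex.conj_re, Complex.conj_im, Complex.I_re, Complex.I_im,
    Complex.ofReal_re, Complex.ofReal_im]
  ring

lemma fderiv_magCurrent_sub (hα : ContDiff ℝ 1 α) (hg : ContDiff ℝ 2 g) (x v w : E) :
    fderiv ℝ (magCurrent α g v) x w - fderiv ℝ (magCurrent α g w) x v
      = 2 * inner ℝ (Complex.I * magDeriv α g x w) (magDeriv α g x v)
        - magField α x w v * ‖g x‖ ^ 2 := by
  have hcomm : inner ℝ (Complex.I * g x) (magDeriv α (fun y => magDeriv α g y v) x w)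
      - inner ℝ (Complex.I * g x) (magDeriv α (fun y => magDeriv α g y w) x v)
      = -(magField α x w v * ‖g x‖ ^ 2) := by
    rw [← inner_sub_right, magDeriv_magDeriv_sub hα hg, inner_neg_right,
      real_inner_smul_right, real_inner_self_eq_norm_sq, norm_mul, Complex.norm_I, one_mul]
  have hanti : inner ℝ (Complex.I * magDeriv α g x v) (magDeriv α g x w)
      = -inner ℝ (Complex.I * magDeriv α g x w) (magDeriv α g x v) := by
    simp only [Complex.inner, Complex.mul_re, Complex.mul_im, Complex.conj_re, Complex.conj_im,
      Complex.I_re, Complex.I_im]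
    ring
  rw [fderiv_magCurrent hα hg, fderiv_magCurrent hα hg]
  linear_combination hcomm - hanti

lemma exists_magDeriv_eq_zero_of_magField_eq_zero (hα : ContDiff ℝ (⊤ : ℕ∞) α)
    (hB : ∀ x v w, magField α x v w = 0) :
    ∃ g : E → ℂ, ContDiff ℝ (⊤ : ℕ∞) g ∧ (∀ x, g x ≠ 0) ∧ ∀ x, magDeriv α g x = 0 := by
  obtain ⟨φ, hφ⟩ := convex_univ.exists_forall_hasFDerivAt_of_fderiv_symmetric isOpen_univ
    (fun x _ => (hα.differentiable (by simp) x).differentiableWithinAt)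
    (fun x _ v w => sub_eq_zero.1 (hB x v w))
  replace hφ : ∀ x, HasFDerivAt φ (α x) x := fun x => hφ x (mem_univ x)
  have hφs : ContDiff ℝ (⊤ : ℕ∞) φ := by
    rw [contDiff_infty_iff_fderiv, funext fun x => (hφ x).fderiv]
    exact ⟨fun x => (hφ x).differentiableAt, hα⟩
  refine ⟨fun x => Complex.exp (Complex.I * (φ x : ℝ)),
    (contDiff_const.mul (Complex.ofRealCLM.contDiff.comp hφs)).cexp,
    fun x => Complex.exp_ne_zero _, fun x => ?_⟩
  have hderiv : HasFDerivAt (fun x => Complex.exp (Complex.I * (φ x : ℝ))) _ x :=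
    ((Complex.ofRealCLM.hasFDerivAt.comp x (hφ x)).const_mul Complex.I).cexp
  ext v
  rw [magDeriv_apply, hderiv.fderiv]
  simp
  ring

end MagneticDerivative

section DiamagneticComparison

lemma le_exp_mul_add_integral_of_neg_add_le_deriv {a b : ℝ} (hab : a ≤ b) {u u' ρ : ℝ → ℝ}
    (hu : ∀ t, HasDerivAt u (u' t) t) (hρ : Continuous ρ) (hρ0 : 0 ≤ ρ)
    (hle : ∀ t, -(u t + ρ t) ≤ u' t) :
    u a ≤ Real.exp (b - a) * (u b + ∫ t in a..b, ρ t) := by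
  have hderiv : ∀ t, HasDerivAt (fun t => -(Real.exp (t - a) * u t))
      (-(Real.exp (t - a) * (u t + u' t))) t := fun t =>
    ((((hasDerivAt_id' t).sub_const a).exp.mul (hu t)).neg).congr_deriv (by ring)
  have hbound : ∀ t ∈ Ioo a b,
      -(Real.exp (t - a) * (u t + u' t)) ≤ Real.exp (b - a) * ρ t := fun t ht => by
    have hexp : Real.exp (t - a) ≤ Real.exp (b - a) := by gcongr; exact ht.2.le
    calc -(Real.exp (t - a) * (u t + u' t)) = Real.exp (t - a) * -(u t + u' t) := by ring
      _ ≤ Real.exp (t - a) * ρ t := by gcongr; linarith [hle t]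
      _ ≤ Real.exp (b - a) * ρ t := mul_le_mul_of_nonneg_right hexp (hρ0 t)
  have hmono := intervalIntegral.sub_le_integral_of_hasDeriv_right_of_le hab
    (fun t _ => (hderiv t).continuousAt.continuousWithinAt)
    (fun t _ => (hderiv t).hasDerivWithinAt) (hρ.const_mul _).integrableOn_Icc hbound
  rw [intervalIntegral.integral_const_mul, sub_self, Real.exp_zero] at hmono
  linarith

variable {E : Type*} [NormedAddCommGroup E] [NormedSpace ℝ E] {α : E → E →L[ℝ] ℝ} {g : E → ℂ}

/- The potential drops out of the derivative of `‖g‖ ^ 2`, so Grönwall's inequality along the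
segment gives a constant that does not depend on `α`. -/
lemma norm_sq_le_exp_one_mul_add_integral_lineMap (hα : Continuous α) (hg : ContDiff ℝ 1 g)
    (x y : E) :
    ‖g x‖ ^ 2 ≤ Real.exp 1 * (‖g y‖ ^ 2 + ‖y - x‖ ^ 2
      * ∫ t in (0 : ℝ)..1, ‖magDeriv α g (AffineMap.lineMap x y t)‖ ^ 2) := by
  have hD := continuous_magDeriv hα hg
  have hderiv : ∀ t : ℝ, HasDerivAt (fun t => ‖g (AffineMap.lineMap x y t)‖ ^ 2)
      (2 * inner ℝ (g (AffineMap.lineMap x y t))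
        (magDeriv α g (AffineMap.lineMap x y t) (y - x))) t := fun t => by
    rw [inner_magDeriv_apply]
    exact ((hg.differentiable one_ne_zero _).hasFDerivAt.comp_hasDerivAt t
      AffineMap.hasDerivAt_lineMap).norm_sq
  have hle : ∀ z : E, -(‖g z‖ ^ 2 + ‖y - x‖ ^ 2 * ‖magDeriv α g z‖ ^ 2)
      ≤ 2 * inner ℝ (g z) (magDeriv α g z (y - x)) := fun z => by
    have hinner : |inner ℝ (g z) (magDeriv α g z (y - x))|
        ≤ ‖g z‖ * (‖magDeriv α g z‖ * ‖y - x‖) :=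
      (abs_real_inner_le_norm _ _).trans
        (mul_le_mul_of_nonneg_left ((magDeriv α g z).le_opNorm _) (norm_nonneg _))
    linarith [neg_le_of_abs_le hinner, two_mul_le_add_sq ‖g z‖ (‖magDeriv α g z‖ * ‖y - x‖)]
  simpa [intervalIntegral.integral_const_mul] using
    le_exp_mul_add_integral_of_neg_add_le_deriv zero_le_one hderiv (by fun_prop)
      (fun t => by positivity) fun t => hle (AffineMap.lineMap x y t)

lemma norm_sq_le_exp_one_mul_add_integral_homothety (hα : Continuous α) (hg : ContDiff ℝ 1 g)
    (c : E) (σ : ℝ) (x : E) :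
    ‖g x‖ ^ 2 ≤ Real.exp 1 * (‖g (AffineMap.homothety c σ x)‖ ^ 2 + ((σ - 1) * ‖x - c‖) ^ 2
      * ∫ t in (0 : ℝ)..1, ‖magDeriv α g (AffineMap.homothety c (AffineMap.lineMap 1 σ t) x)‖ ^ 2)
    := by
  have hdiff : AffineMap.homothety c σ x - x = (σ - 1) • (x - c) := by
    rw [AffineMap.homothety_apply, vsub_eq_sub, vadd_eq_add]
    module
  have hline : ∀ t : ℝ, AffineMap.lineMap x (AffineMap.homothety c σ x) t
      = AffineMap.homothety c (AffineMap.lineMap 1 σ t) x := fun t => by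
    simp only [AffineMap.lineMap_apply, AffineMap.homothety_apply, vsub_eq_sub, vadd_eq_add,
      smul_eq_mul]
    module
  have hseg := norm_sq_le_exp_one_mul_add_integral_lineMap hα hg x (AffineMap.homothety c σ x)
  rw [hdiff, norm_smul, mul_pow, norm_eq_abs, sq_abs, ← mul_pow] at hseg
  simpa only [hline] using hseg

lemma setIntegral_norm_sq_le_of_map_homothety_le [FiniteDimensional ℝ E] [MeasurableSpace E]
    [BorelSpace E] {ν : Measure E} [IsLocallyFiniteMeasure ν]
    {c : E} {σ ρ : ℝ} {S T T' : Set E} (hSm : MeasurableSet S) (hS : S ⊆ closedBall c ρ)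
    (hTm : MeasurableSet T) (hT : Bornology.IsBounded T)
    (hT'm : MeasurableSet T') (hT' : Bornology.IsBounded T') {C C' : ℝ≥0}
    (hST : ∀ t ∈ uIcc 1 σ, MapsTo (AffineMap.homothety c t) S T)
    (hmap : ∀ t ∈ uIcc 1 σ, ν.map (AffineMap.homothety c t) ≤ C • ν)
    (hST' : MapsTo (AffineMap.homothety c σ) S T')
    (hmap' : ν.map (AffineMap.homothety c σ) ≤ C' • ν)
    (hα : Continuous α) (hg : ContDiff ℝ 1 g) :
    ∫ x in S, ‖g x‖ ^ 2 ∂ν ≤ Real.exp 1 * (C' * ∫ x in T', ‖g x‖ ^ 2 ∂ν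
      + ((σ - 1) * ρ) ^ 2 * (C * ∫ x in T, ‖magDeriv α g x‖ ^ 2 ∂ν)) := by
  have hSb : Bornology.IsBounded S := isBounded_closedBall.subset hS
  have hg2 : Continuous fun x => ‖g x‖ ^ 2 := by have := hg.continuous; fun_prop
  have hD2 : Continuous fun x => ‖magDeriv α g x‖ ^ 2 := by
    have := continuous_magDeriv hα hg; fun_prop
  have hσ : Continuous (AffineMap.homothety c σ) := AffineMap.continuous_of_finiteDimensional _
  let h : ℝ → E → E := fun t => AffineMap.homothety c (AffineMap.lineMap 1 σ t)
  have hh : Continuous (Function.uncurry h) := by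
    simp only [h, Function.uncurry_def, AffineMap.homothety_apply, vsub_eq_sub, vadd_eq_add,
      AffineMap.lineMap_apply]
    fun_prop
  have hIcc : ∀ t ∈ Icc (0 : ℝ) 1, AffineMap.lineMap 1 σ t ∈ uIcc 1 σ := fun t ht => by
    rw [← segment_eq_uIcc, segment_eq_image_lineMap]
    exact mem_image_of_mem _ ht
  have hpt : ∀ x ∈ S, ‖g x‖ ^ 2 ≤ Real.exp 1 * (‖g (AffineMap.homothety c σ x)‖ ^ 2
      + ((σ - 1) * ρ) ^ 2 * ∫ t in (0 : ℝ)..1, ‖magDeriv α g (h t x)‖ ^ 2) := fun x hx => by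
    have hxρ : ‖x - c‖ ≤ ρ := by simpa [dist_eq_norm] using hS hx
    refine (norm_sq_le_exp_one_mul_add_integral_homothety hα hg c σ x).trans ?_
    rw [mul_pow, mul_pow]
    gcongr
    exact intervalIntegral.integral_nonneg zero_le_one fun t _ => by positivity
  have hint : IntegrableOn (fun x => ‖g (AffineMap.homothety c σ x)‖ ^ 2) S ν :=
    integrableOn_of_continuous_of_isBounded (hg2.comp hσ) hSb
  have hint' : IntegrableOn (fun x => ((σ - 1) * ρ) ^ 2
      * ∫ t in (0 : ℝ)..1, ‖magDeriv α g (h t x)‖ ^ 2) S ν :=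
    (integrableOn_of_continuous_of_isBounded
      (intervalIntegral.continuous_parametric_intervalIntegral_of_continuous'
        (f := fun x t => ‖magDeriv α g (h t x)‖ ^ 2) (hD2.comp (hh.comp continuous_swap)) 0 1)
      hSb).const_mul _
  have hmono := setIntegral_mono_on (integrableOn_of_continuous_of_isBounded hg2 hSb)
    ((Integrable.add hint hint').const_mul _) hSm hpt
  rw [integral_const_mul] at hmono
  refine (hmono.trans_eq (congrArg _ (integral_add hint hint'))).trans ?_
  rw [integral_const_mul]
  gcongr
  · exact setIntegral_comp_le_of_map_le hσ.measurable hT'm hST' hmap'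
      (integrableOn_of_continuous_of_isBounded hg2 hT') fun x => by positivity
  · exact setIntegral_intervalIntegral_comp_le_of_map_le hh hSb hT hTm
      (fun t ht => hST _ (hIcc t ht)) (fun t ht => hmap _ (hIcc t ht)) hD2
      fun x => by positivity

end DiamagneticComparison

section FieldEstimate

variable {E : Type*} [NormedAddCommGroup E] [NormedSpace ℝ E] [FiniteDimensional ℝ E]
  [MeasurableSpace E] [BorelSpace E] {μ : Measure E} [μ.IsAddHaarMeasure]
  {α : E → E →L[ℝ] ℝ} {g : E → ℂ}

lemma integral_mul_fderiv_eq_neg_fderiv_mul_of_hasCompactSupport {f η : E → ℝ}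
    (hη : ContDiff ℝ 1 η) (hηc : HasCompactSupport η) (hf : ContDiff ℝ 1 f) (v : E) :
    ∫ x, η x * fderiv ℝ f x v ∂μ = -∫ x, fderiv ℝ η x v * f x ∂μ := by
  have hηcont := hη.continuous
  have := hη.continuous_fderiv one_ne_zero
  have hfcont := hf.continuous
  have := hf.continuous_fderiv one_ne_zero
  exact integral_mul_fderiv_eq_neg_fderiv_mul_of_integrable
    (Continuous.integrable_of_hasCompactSupport (by fun_prop) (hηc.fderiv_apply ℝ v).mul_right)
    (Continuous.integrable_of_hasCompactSupport (by fun_prop) hηc.mul_right)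
    (Continuous.integrable_of_hasCompactSupport (by fun_prop) hηc.mul_right)
    (fun x _ => hη.differentiable one_ne_zero x) (fun x _ => hf.differentiable one_ne_zero x)

lemma integral_mul_magField_mul_norm_sq (hα : ContDiff ℝ 1 α) (hg : ContDiff ℝ 2 g) {η : E → ℝ}
    (hη : ContDiff ℝ 1 η) (hηc : HasCompactSupport η) (v w : E) :
    ∫ x, η x * (magField α x v w * ‖g x‖ ^ 2) ∂μ
      = ∫ x, (2 * η x * inner ℝ (Complex.I * magDeriv α g x v) (magDeriv α g x w)
          + (fderiv ℝ η x v * magCurrent α g w x - fderiv ℝ η x w * magCurrent α g v x)) ∂μ := by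
  have hηcont := hη.continuous
  have := hη.continuous_fderiv one_ne_zero
  have hJ := fun u => (contDiff_magCurrent hα hg u).continuous
  have hdJ := fun u => (contDiff_magCurrent hα hg u).continuous_fderiv one_ne_zero
  have hD := continuous_magDeriv hα.continuous (hg.of_le one_le_two)
  have hint₁ : ∀ u z, Integrable (fun x => fderiv ℝ η x u * magCurrent α g z x) μ := fun u z =>
    Continuous.integrable_of_hasCompactSupport (by fun_prop) (hηc.fderiv_apply ℝ u).mul_right
  have hint₂ : ∀ u z, Integrable (fun x => η x * fderiv ℝ (magCurrent α g z) x u) μ := fun u z =>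
    Continuous.integrable_of_hasCompactSupport (by fun_prop) hηc.mul_right
  have hint₃ : Integrable
      (fun x => 2 * η x * inner ℝ (Complex.I * magDeriv α g x v) (magDeriv α g x w)) μ :=
    Continuous.integrable_of_hasCompactSupport (by fun_prop) hηc.mul_left.mul_right
  calc ∫ x, η x * (magField α x v w * ‖g x‖ ^ 2) ∂μ
      = ∫ x, (2 * η x * inner ℝ (Complex.I * magDeriv α g x v) (magDeriv α g x w)
          - (η x * fderiv ℝ (magCurrent α g w) x v - η x * fderiv ℝ (magCurrent α g v) x w)) ∂μ :=
        integral_congr_ae (Filter.Eventually.of_forall fun x => by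
          linear_combination η x * fderiv_magCurrent_sub hα hg x w v)
    _ = _ := by
        rw [integral_sub hint₃ (by exact (hint₂ v w).sub (hint₂ w v)),
          integral_sub (hint₂ v w) (hint₂ w v),
          integral_mul_fderiv_eq_neg_fderiv_mul_of_hasCompactSupport hη hηc
            (contDiff_magCurrent hα hg w),
          integral_mul_fderiv_eq_neg_fderiv_mul_of_hasCompactSupport hη hηc
            (contDiff_magCurrent hα hg v),
          integral_add hint₃ (by exact (hint₁ v w).sub (hint₁ w v)),
          integral_sub (hint₁ v w) (hint₁ w v)]
        ring

lemma integral_mul_magField_mul_norm_sq_le (hα : ContDiff ℝ 1 α) (hg : ContDiff ℝ 2 g) {η : E → ℝ}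
    (hη : ContDiff ℝ 1 η) (hηc : HasCompactSupport η) (hη1 : ∀ x, |η x| ≤ 1) {M : ℝ}
    (hM : ∀ x, ‖fderiv ℝ η x‖ ≤ M) (v w : E) :
    ∫ x, η x * (magField α x v w * ‖g x‖ ^ 2) ∂μ
      ≤ ∫ x in tsupport η, 2 * (‖v‖ * ‖w‖)
          * (‖magDeriv α g x‖ ^ 2 + M * (‖g x‖ * ‖magDeriv α g x‖)) ∂μ := by
  have hηcont := hη.continuous
  have := hη.continuous_fderiv one_ne_zero
  have hgcont := hg.continuous
  have hJ := fun u => (contDiff_magCurrent hα hg u).continuous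
  have hD := continuous_magDeriv hα.continuous (hg.of_le one_le_two)
  have hinner : ∀ x, |2 * η x * inner ℝ (Complex.I * magDeriv α g x v) (magDeriv α g x w)|
      ≤ 2 * (‖v‖ * ‖w‖) * ‖magDeriv α g x‖ ^ 2 := fun x =>
    calc |2 * η x * inner ℝ (Complex.I * magDeriv α g x v) (magDeriv α g x w)|
        = 2 * |η x| * |inner ℝ (Complex.I * magDeriv α g x v) (magDeriv α g x w)| := by
          rw [abs_mul, abs_mul, abs_two]
      _ ≤ 2 * 1 * (‖magDeriv α g x‖ * ‖v‖ * (‖magDeriv α g x‖ * ‖w‖)) := by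
          gcongr
          · exact hη1 x
          · refine (abs_real_inner_le_norm _ _).trans ?_
            rw [norm_mul, Complex.norm_I, one_mul]
            gcongr <;> exact (magDeriv α g x).le_opNorm _
      _ = 2 * (‖v‖ * ‖w‖) * ‖magDeriv α g x‖ ^ 2 := by ring
  have hcurrent : ∀ x u z, |fderiv ℝ η x u * magCurrent α g z x|
      ≤ ‖u‖ * ‖z‖ * (M * (‖g x‖ * ‖magDeriv α g x‖)) := fun x u z =>
    calc |fderiv ℝ η x u * magCurrent α g z x|
        ≤ (M * ‖u‖) * (‖z‖ * (‖g x‖ * ‖magDeriv α g x‖)) := by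
          rw [abs_mul]
          gcongr
          · exact (abs_nonneg _).trans ((fderiv ℝ η x).le_of_opNorm_le (hM x) u)
          · exact (fderiv ℝ η x).le_of_opNorm_le (hM x) u
          · exact abs_magCurrent_le z x
      _ = ‖u‖ * ‖z‖ * (M * (‖g x‖ * ‖magDeriv α g x‖)) := by ring
  rw [integral_mul_magField_mul_norm_sq hα hg hη hηc,
    ← setIntegral_eq_integral_of_forall_compl_eq_zero (s := tsupport η) fun x hx => by
      simp [image_eq_zero_of_notMem_tsupport hx, fderiv_of_notMem_tsupport ℝ hx]]
  refine setIntegral_mono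
    (integrableOn_of_continuous_of_isBounded (by fun_prop) hηc.isCompact.isBounded)
    (integrableOn_of_continuous_of_isBounded (by fun_prop) hηc.isCompact.isBounded) fun x => ?_
  linarith [le_of_abs_le (hinner x), le_of_abs_le (hcurrent x v w),
    neg_le_of_abs_le (hcurrent x w v)]

lemma mul_setIntegral_norm_sq_le_integral_mul_magField (hα : ContDiff ℝ 1 α)
    (hg : Continuous g) {v w x₀ : E} {β : ℝ} {η : ContDiffBump x₀} (hβ : 0 ≤ β)
    (hB : ∀ x ∈ closedBall x₀ η.rOut, β ≤ magField α x v w) :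
    β * ∫ x in ball x₀ η.rIn, ‖g x‖ ^ 2 ∂μ
      ≤ ∫ x, η x * (magField α x v w * ‖g x‖ ^ 2) ∂μ := by
  have hBc := continuous_magField hα v w
  have hηc : Continuous η := η.continuous
  have hsub : ball x₀ η.rIn ⊆ closedBall x₀ η.rOut :=
    ball_subset_closedBall.trans (closedBall_subset_closedBall η.rIn_lt_rOut.le)
  have hint : ∀ {S : Set E}, Bornology.IsBounded S →
      IntegrableOn (fun x => η x * (magField α x v w * ‖g x‖ ^ 2)) S μ := fun hS =>
    integrableOn_of_continuous_of_isBounded (by fun_prop) hS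
  calc β * ∫ x in ball x₀ η.rIn, ‖g x‖ ^ 2 ∂μ
      = ∫ x in ball x₀ η.rIn, β * ‖g x‖ ^ 2 ∂μ := (integral_const_mul _ _).symm
    _ ≤ ∫ x in ball x₀ η.rIn, η x * (magField α x v w * ‖g x‖ ^ 2) ∂μ := by
        refine setIntegral_mono_on
          (integrableOn_of_continuous_of_isBounded (by fun_prop) isBounded_ball)
          (hint isBounded_ball) measurableSet_ball fun x hx => ?_
        rw [η.one_of_mem_closedBall (ball_subset_closedBall hx), one_mul]
        gcongr
        exact hB x (hsub hx)
    _ ≤ ∫ x in closedBall x₀ η.rOut, η x * (magField α x v w * ‖g x‖ ^ 2) ∂μ := by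
        refine setIntegral_mono_set (hint isBounded_closedBall) ?_ hsub.eventuallyLE
        filter_upwards [ae_restrict_mem measurableSet_closedBall] with x hx
        exact mul_nonneg η.nonneg (mul_nonneg (hβ.trans (hB x hx)) (by positivity))
    _ = ∫ x, η x * (magField α x v w * ‖g x‖ ^ 2) ∂μ :=
        setIntegral_eq_integral_of_forall_compl_eq_zero fun x hx => by
          rw [← η.tsupport_eq] at hx
          rw [image_eq_zero_of_notMem_tsupport hx, zero_mul]

lemma exists_setIntegral_norm_sq_le_of_le_magField (hα : ContDiff ℝ 1 α) {v w x₀ : E} {β ρ : ℝ}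
    (hβ : 0 < β) (hρ : 0 < ρ) (hB : ∀ x ∈ closedBall x₀ ρ, β ≤ magField α x v w) {δ : ℝ}
    (hδ : 0 < δ) :
    ∃ C, 0 ≤ C ∧ ∀ g : E → ℂ, ContDiff ℝ 2 g →
      ∫ x in ball x₀ (ρ / 2), ‖g x‖ ^ 2 ∂μ
        ≤ δ * ∫ x in closedBall x₀ ρ, ‖g x‖ ^ 2 ∂μ
          + C * ∫ x in closedBall x₀ ρ, ‖magDeriv α g x‖ ^ 2 ∂μ := by
  let η : ContDiffBump x₀ := ⟨ρ / 2, ρ, half_pos hρ, half_lt_self hρ⟩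
  obtain ⟨M, hM⟩ := (η.hasCompactSupport.fderiv ℝ).exists_bound_of_continuous
    (η.contDiff.continuous_fderiv (n := 1) one_ne_zero)
  let K := ‖v‖ * ‖w‖
  refine ⟨(2 * K + (β * δ)⁻¹ * (K * M) ^ 2) / β, by positivity, fun g hg => ?_⟩
  have hgcont := hg.continuous
  have hD := continuous_magDeriv hα.continuous (hg.of_le one_le_two)
  have hint : ∀ {f : E → ℝ}, Continuous f → IntegrableOn f (closedBall x₀ ρ) μ := fun hf =>
    integrableOn_of_continuous_of_isBounded hf isBounded_closedBall
  have hlower : β * ∫ x in ball x₀ (ρ / 2), ‖g x‖ ^ 2 ∂μ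
      ≤ ∫ x, η x * (magField α x v w * ‖g x‖ ^ 2) ∂μ :=
    mul_setIntegral_norm_sq_le_integral_mul_magField (η := η) hα hgcont hβ.le hB
  have hupper : ∫ x, η x * (magField α x v w * ‖g x‖ ^ 2) ∂μ
      ≤ ∫ x in closedBall x₀ ρ, 2 * K
          * (‖magDeriv α g x‖ ^ 2 + M * (‖g x‖ * ‖magDeriv α g x‖)) ∂μ := by
    have h := integral_mul_magField_mul_norm_sq_le (μ := μ) hα hg η.contDiff η.hasCompactSupport
      (fun x => by rw [abs_of_nonneg η.nonneg]; exact η.le_one) hM v w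
    rwa [η.tsupport_eq] at h
  have hyoung : ∀ x, 2 * K * (‖magDeriv α g x‖ ^ 2 + M * (‖g x‖ * ‖magDeriv α g x‖))
      ≤ β * δ * ‖g x‖ ^ 2 + (2 * K + (β * δ)⁻¹ * (K * M) ^ 2) * ‖magDeriv α g x‖ ^ 2 := fun x => by
    linarith [two_mul_le_add_mul_sq (a := ‖g x‖) (b := K * M * ‖magDeriv α g x‖) (mul_pos hβ hδ)]
  have hsplit := setIntegral_mono (hint (by fun_prop))
    ((hint (by fun_prop : Continuous fun x => β * δ * ‖g x‖ ^ 2)).add (hint (by fun_prop))) hyoung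
  rw [integral_add' (hint (by fun_prop)) (hint (by fun_prop)), integral_const_mul (β * δ),
    integral_const_mul (2 * K + _)] at hsplit
  rw [div_mul_eq_mul_div, ← sub_le_iff_le_add', le_div_iff₀ hβ]
  linarith [(hlower.trans hupper).trans hsplit]

end FieldEstimate

section SpectralGap

variable {E : Type*} [NormedAddCommGroup E] [NormedSpace ℝ E] [FiniteDimensional ℝ E]
  [MeasurableSpace E] [BorelSpace E] {μ : Measure E} [μ.IsAddHaarMeasure]
  {α : E → E →L[ℝ] ℝ}

lemma exists_setIntegral_norm_sq_le_setIntegral_ball_add {S : Set E} (hS : Convex ℝ S)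
    (hSm : MeasurableSet S) (hSb : Bornology.IsBounded S) {x₀ : E} (hx₀ : x₀ ∈ S) {r : ℝ}
    (hr : 0 < r) (hα : Continuous α) :
    ∃ C, 0 < C ∧ ∀ g : E → ℂ, ContDiff ℝ 1 g → ∫ x in S, ‖g x‖ ^ 2 ∂μ
      ≤ C * (∫ x in ball x₀ r, ‖g x‖ ^ 2 ∂μ + ∫ x in S, ‖magDeriv α g x‖ ^ 2 ∂μ) := by
  obtain ⟨ρ, hρ, hSρ⟩ := hSb.subset_closedBall_lt 0 x₀
  obtain ⟨σ, hσ, hσ1, hσρ⟩ : ∃ σ : ℝ, 0 < σ ∧ σ ≤ 1 ∧ σ * ρ < r :=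
    ⟨r / (r + ρ), by positivity, (div_le_one (by positivity)).2 (by linarith), by
      rw [div_mul_eq_mul_div, div_lt_iff₀ (by positivity)]
      nlinarith⟩
  let C : ℝ≥0 := (σ ^ finrank ℝ E)⁻¹.toNNReal
  have hC : (C : ℝ) = (σ ^ finrank ℝ E)⁻¹ := Real.coe_toNNReal _ (by positivity)
  have hmem : ∀ t ∈ uIcc 1 σ, σ ≤ t ∧ t ≤ 1 := fun t ht => by rwa [uIcc_of_ge hσ1] at ht
  have hmap : ∀ t ∈ uIcc 1 σ, μ.map (AffineMap.homothety x₀ t) ≤ C • μ := fun t ht => by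
    rw [map_homothety_addHaar μ (hσ.trans_le (hmem t ht).1)]
    simp only [C]
    gcongr
    exact (hmem t ht).1
  have hmaps : ∀ t ∈ uIcc 1 σ, MapsTo (AffineMap.homothety x₀ t) S S := fun t ht x hx => by
    rw [AffineMap.homothety_eq_lineMap]
    exact hS.lineMap_mem hx₀ hx ⟨hσ.le.trans (hmem t ht).1, (hmem t ht).2⟩
  have hmaps_ball : MapsTo (AffineMap.homothety x₀ σ) S (ball x₀ r) := fun x hx => by
    rw [mem_ball, dist_homothety_center, norm_of_nonneg hσ.le]
    exact (mul_le_mul_of_nonneg_left (mem_closedBall'.1 (hSρ hx)) hσ.le).trans_lt hσρ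
  refine ⟨Real.exp 1 * C * (1 + ((σ - 1) * ρ) ^ 2), by rw [hC]; positivity, fun g hg => ?_⟩
  refine (setIntegral_norm_sq_le_of_map_homothety_le hSm hSρ hSm hSb measurableSet_ball
    isBounded_ball hmaps hmap hmaps_ball (hmap σ right_mem_uIcc) hα hg).trans ?_
  have : 0 ≤ ∫ x in ball x₀ r, ‖g x‖ ^ 2 ∂μ := integral_nonneg fun x => by positivity
  have : 0 ≤ ∫ x in S, ‖magDeriv α g x‖ ^ 2 ∂μ := integral_nonneg fun x => by positivity
  have hslack : 0 ≤ Real.exp 1 * C * (((σ - 1) * ρ) ^ 2 * ∫ x in ball x₀ r, ‖g x‖ ^ 2 ∂μ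
      + ∫ x in S, ‖magDeriv α g x‖ ^ 2 ∂μ) := by positivity
  linarith

lemma exists_setIntegral_norm_sq_le_setIntegral_magDeriv {S : Set E} (hS : Convex ℝ S)
    (hSo : IsOpen S) (hSb : Bornology.IsBounded S) (hα : ContDiff ℝ 1 α) {x₀ v w : E}
    (hx₀ : x₀ ∈ S) (hB : magField α x₀ v w ≠ 0) :
    ∃ C, 0 < C ∧ ∀ g : E → ℂ, ContDiff ℝ 2 g →
      ∫ x in S, ‖g x‖ ^ 2 ∂μ ≤ C * ∫ x in S, ‖magDeriv α g x‖ ^ 2 ∂μ := by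
  wlog hpos : 0 < magField α x₀ v w generalizing v w
  · have hswap : magField α x₀ w v = -magField α x₀ v w := (neg_sub _ _).symm
    refine this (v := w) (w := v) ?_ ?_ <;> rw [hswap]
    exacts [neg_ne_zero.2 hB, neg_pos.2 (hB.lt_of_le (not_lt.1 hpos))]
  obtain ⟨ρ, hρ, hρB⟩ := nhds_basis_closedBall.mem_iff.1 (Filter.inter_mem (hSo.mem_nhds hx₀)
    ((continuous_magField hα v w).continuousAt.eventually_const_le (half_lt_self hpos)))
  obtain ⟨C₁, hC₁, hball⟩ := exists_setIntegral_norm_sq_le_setIntegral_ball_add (μ := μ) hS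
    hSo.measurableSet hSb hx₀ (half_pos hρ) hα.continuous
  obtain ⟨C₂, hC₂, hfield⟩ := exists_setIntegral_norm_sq_le_of_le_magField (μ := μ) hα
    (half_pos hpos) hρ (fun x hx => (hρB hx).2) (inv_pos.2 (mul_pos two_pos hC₁))
  refine ⟨2 * C₁ * (C₂ + 1), by positivity, fun g hg => ?_⟩
  have hgcont := hg.continuous
  have hD := continuous_magDeriv hα.continuous (hg.of_le one_le_two)
  have hmono : ∀ {f : E → ℝ}, Continuous f → 0 ≤ f →
      ∫ x in closedBall x₀ ρ, f x ∂μ ≤ ∫ x in S, f x ∂μ := fun hf hf0 =>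
    setIntegral_mono_set (integrableOn_of_continuous_of_isBounded hf hSb)
      (Filter.Eventually.of_forall hf0) (hρB.trans inter_subset_left).eventuallyLE
  have hN := hmono (f := fun x => ‖g x‖ ^ 2) (by fun_prop) fun x => by positivity
  have hE := hmono (f := fun x => ‖magDeriv α g x‖ ^ 2) (by fun_prop) fun x => by positivity
  have habsorb : ∫ x in S, ‖g x‖ ^ 2 ∂μ
      ≤ 2⁻¹ * ∫ x in S, ‖g x‖ ^ 2 ∂μ + C₁ * (C₂ + 1) * ∫ x in S, ‖magDeriv α g x‖ ^ 2 ∂μ :=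
    calc ∫ x in S, ‖g x‖ ^ 2 ∂μ
        ≤ C₁ * (((2 * C₁)⁻¹ * ∫ x in S, ‖g x‖ ^ 2 ∂μ
            + C₂ * ∫ x in S, ‖magDeriv α g x‖ ^ 2 ∂μ) + ∫ x in S, ‖magDeriv α g x‖ ^ 2 ∂μ) := by
          refine (hball g (hg.of_le one_le_two)).trans ?_
          gcongr
          exact (hfield g hg).trans (by gcongr)
      _ = _ := by
          field_simp
          ring
  linarith

lemma setIntegral_ball_div_normRpowMeasure_norm_sq_le {p R σ : ℝ}
    [IsLocallyFiniteMeasure (normRpowMeasure μ p)] (hp : -(finrank ℝ E : ℝ) ≤ p) (hσ : 1 ≤ σ)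
    (hα : Continuous α) {g : E → ℂ} (hg : ContDiff ℝ 1 g) :
    ∫ x in ball 0 (R / σ), ‖g x‖ ^ 2 ∂normRpowMeasure μ p
      ≤ Real.exp 1 * (σ ^ (-(finrank ℝ E + p)) * ∫ x in ball 0 R, ‖g x‖ ^ 2 ∂normRpowMeasure μ p
        + ((σ - 1) * (R / σ)) ^ 2
          * ∫ x in ball 0 R, ‖magDeriv α g x‖ ^ 2 ∂normRpowMeasure μ p) := by
  set ν := normRpowMeasure μ p
  have hσ0 : 0 < σ := one_pos.trans_le hσ
  have hmem : ∀ t ∈ uIcc 1 σ, 1 ≤ t ∧ t ≤ σ := fun t ht => by rwa [uIcc_of_le hσ] at ht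
  have hmap : ∀ t ∈ uIcc 1 σ, ν.map (AffineMap.homothety 0 t) ≤ (1 : ℝ≥0) • ν := fun t ht => by
    rw [map_homothety_zero_normRpowMeasure μ (one_pos.trans_le (hmem t ht).1)]
    gcongr
    exact Real.toNNReal_le_one.2 (rpow_le_one_of_one_le_of_nonpos (hmem t ht).1 (by linarith))
  have hmaps : ∀ t ∈ uIcc 1 σ,
      MapsTo (AffineMap.homothety (0 : E) t) (ball 0 (R / σ)) (ball 0 R) := fun t ht x hx => by
    have hx' := (lt_div_iff₀' hσ0).1 (mem_ball'.1 hx)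
    rw [mem_ball, dist_homothety_center, norm_of_nonneg (zero_le_one.trans (hmem t ht).1)]
    exact (mul_le_mul_of_nonneg_right (hmem t ht).2 dist_nonneg).trans_lt hx'
  have h := setIntegral_norm_sq_le_of_map_homothety_le measurableSet_ball
    ball_subset_closedBall measurableSet_ball isBounded_ball measurableSet_ball isBounded_ball
    hmaps hmap (hmaps σ right_mem_uIcc) (map_homothety_zero_normRpowMeasure μ hσ0 p).le hα hg
  rwa [NNReal.coe_one, one_mul, Real.coe_toNNReal _ (by positivity)] at h

lemma exists_setIntegral_normRpowMeasure_norm_sq_le_add {p R : ℝ}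
    [IsLocallyFiniteMeasure (normRpowMeasure μ p)] (hp : -(finrank ℝ E : ℝ) < p) (hp0 : p ≤ 0)
    (hR : 0 < R) (hα : Continuous α) :
    ∃ C, 0 < C ∧ ∀ g : E → ℂ, ContDiff ℝ 1 g →
      ∫ x in ball 0 R, ‖g x‖ ^ 2 ∂normRpowMeasure μ p
        ≤ C * (∫ x in ball 0 R, ‖g x‖ ^ 2 ∂μ
          + ∫ x in ball 0 R, ‖magDeriv α g x‖ ^ 2 ∂normRpowMeasure μ p) := by
  set ν := normRpowMeasure μ p
  have hexponent : 0 < finrank ℝ E + p := by linarith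
  obtain ⟨σ, hσ, hσ1⟩ : ∃ σ : ℝ, σ ^ (-(finrank ℝ E + p)) ≤ (2 * Real.exp 1)⁻¹ ∧ 1 ≤ σ :=
    (((tendsto_rpow_neg_atTop hexponent).eventually_le_const (by positivity)).and
      (Filter.eventually_ge_atTop 1)).exists
  have hσ0 : 0 < σ := one_pos.trans_le hσ1
  have hhalf : Real.exp 1 * σ ^ (-(finrank ℝ E + p)) ≤ 2⁻¹ :=
    calc Real.exp 1 * σ ^ (-(finrank ℝ E + p)) ≤ Real.exp 1 * (2 * Real.exp 1)⁻¹ := by gcongr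
      _ = 2⁻¹ := by field_simp
  refine ⟨2 * (Real.exp 1 * ((σ - 1) * (R / σ)) ^ 2 + (R / σ) ^ p), by positivity, fun g hg => ?_⟩
  have hgcont := hg.continuous
  have hinner := setIntegral_ball_div_normRpowMeasure_norm_sq_le (μ := μ) (R := R) hp.le hσ1 hα hg
  have houter := setIntegral_ball_normRpowMeasure_le_add (μ := μ) (R := R) hp0 (div_pos hR hσ0)
    (f := fun x => ‖g x‖ ^ 2) (by fun_prop) fun x => by positivity
  have : 0 ≤ ∫ x in ball 0 R, ‖g x‖ ^ 2 ∂μ := integral_nonneg fun x => by positivity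
  have hNν : 0 ≤ ∫ x in ball 0 R, ‖g x‖ ^ 2 ∂ν := integral_nonneg fun x => by positivity
  have : 0 ≤ ∫ x in ball 0 R, ‖magDeriv α g x‖ ^ 2 ∂ν := integral_nonneg fun x => by positivity
  have hslack : 0 ≤ Real.exp 1 * ((σ - 1) * (R / σ)) ^ 2 * ∫ x in ball 0 R, ‖g x‖ ^ 2 ∂μ
    + (R / σ) ^ p * ∫ x in ball 0 R, ‖magDeriv α g x‖ ^ 2 ∂ν := by positivity
  have habsorb := mul_le_mul_of_nonneg_right hhalf hNν
  linarith

theorem exists_setIntegral_normRpowMeasure_norm_sq_le {p R : ℝ} (hp : -(finrank ℝ E : ℝ) < p)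
    (hp0 : p ≤ 0) (hα : ContDiff ℝ 1 α) {x₀ v w : E} (hx₀ : ‖x₀‖ < R)
    (hB : magField α x₀ v w ≠ 0) :
    ∃ C, 0 < C ∧ ∀ g : E → ℂ, ContDiff ℝ 2 g →
      ∫ x in ball 0 R, ‖g x‖ ^ 2 ∂normRpowMeasure μ p
        ≤ C * ∫ x in ball 0 R, ‖magDeriv α g x‖ ^ 2 ∂normRpowMeasure μ p := by
  have : Nontrivial E :=
    finrank_pos_iff (R := ℝ).1 (by exact_mod_cast neg_lt_zero.1 (hp.trans_le hp0))
  have := isLocallyFiniteMeasure_normRpowMeasure μ hp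
  have hR : 0 < R := (norm_nonneg x₀).trans_lt hx₀
  obtain ⟨C₁, hC₁, hweight⟩ :=
    exists_setIntegral_normRpowMeasure_norm_sq_le_add (μ := μ) hp hp0 hR hα.continuous
  obtain ⟨C₂, hC₂, hgap⟩ := exists_setIntegral_norm_sq_le_setIntegral_magDeriv (μ := μ)
    (convex_ball 0 R) isOpen_ball isBounded_ball hα (mem_ball_zero_iff.2 hx₀) hB
  refine ⟨C₁ * (C₂ * R ^ (-p) + 1), by positivity, fun g hg => ?_⟩
  have hD := continuous_magDeriv hα.continuous (hg.of_le one_le_two)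
  have hE := setIntegral_ball_le_rpow_mul_setIntegral_normRpowMeasure (μ := μ) (R := R) hp0
    (f := fun x => ‖magDeriv α g x‖ ^ 2) (by fun_prop) fun x => by positivity
  calc ∫ x in ball 0 R, ‖g x‖ ^ 2 ∂normRpowMeasure μ p
      ≤ C₁ * (C₂ * (R ^ (-p) * ∫ x in ball 0 R, ‖magDeriv α g x‖ ^ 2 ∂normRpowMeasure μ p)
          + ∫ x in ball 0 R, ‖magDeriv α g x‖ ^ 2 ∂normRpowMeasure μ p) := by
        refine (hweight g (hg.of_le one_le_two)).trans ?_
        gcongr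
        exact (hgap g hg).trans (by gcongr)
    _ = _ := by ring

end SpectralGap

section RayleighQuotient

lemma opNorm_sq_le_sum_norm_apply_sq {𝕜 ι V F : Type*} [RCLike 𝕜] [Fintype ι]
    [NormedAddCommGroup V] [InnerProductSpace 𝕜 V] [SeminormedAddCommGroup F] [NormedSpace 𝕜 F]
    (b : OrthonormalBasis ι 𝕜 V) (L : V →L[𝕜] F) : ‖L‖ ^ 2 ≤ ∑ i, ‖L (b i)‖ ^ 2 := by
  have hL : ‖L‖ ≤ √(∑ i, ‖L (b i)‖ ^ 2) := L.opNorm_le_bound (by positivity) fun v =>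
    calc ‖L v‖ = ‖∑ i, inner 𝕜 (b i) v • L (b i)‖ := by
          rw [← congrArg L (b.sum_repr' v), map_sum]
          simp only [map_smul]
      _ ≤ ∑ i, ‖L (b i)‖ * ‖inner 𝕜 (b i) v‖ :=
          norm_sum_le_of_le _ fun i _ => by rw [norm_smul, mul_comm]
      _ ≤ √(∑ i, ‖L (b i)‖ ^ 2) * √(∑ i, ‖inner 𝕜 (b i) v‖ ^ 2) :=
          Real.sum_mul_le_sqrt_mul_sqrt _ _ _
      _ = √(∑ i, ‖L (b i)‖ ^ 2) * ‖v‖ := by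
          rw [b.sum_sq_norm_inner_right, Real.sqrt_sq (norm_nonneg v)]
  exact (Real.le_sqrt (norm_nonneg L) (by positivity)).1 hL

variable {d : ℕ} {A : EuclideanSpace ℝ (Fin d) → EuclideanSpace ℝ (Fin d)}
  {g : EuclideanSpace ℝ (Fin d) → ℂ} {R : ℝ}

lemma magEnergy_eq_sum_norm_magDeriv_sq (x : EuclideanSpace ℝ (Fin d)) :
    magEnergy d A g x
      = ∑ j, ‖magDeriv (fun y => innerSL ℝ (A y)) g x (EuclideanSpace.single j 1)‖ ^ 2 := by
  refine Finset.sum_congr rfl fun j _ => ?_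
  rw [magDeriv_apply, innerSL_apply_apply, EuclideanSpace.inner_single_right]
  simp [mul_assoc, mul_left_comm]

lemma norm_magDeriv_sq_le_magEnergy (x : EuclideanSpace ℝ (Fin d)) :
    ‖magDeriv (fun y => innerSL ℝ (A y)) g x‖ ^ 2 ≤ magEnergy d A g x := by
  rw [magEnergy_eq_sum_norm_magDeriv_sq]
  simpa using opNorm_sq_le_sum_norm_apply_sq (EuclideanSpace.basisFun (Fin d) ℝ)
    (magDeriv (fun y => innerSL ℝ (A y)) g x)

lemma continuous_magEnergy (hA : Continuous A) (hg : ContDiff ℝ 1 g) :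
    Continuous (magEnergy d A g) := by
  have hD := continuous_magDeriv (α := fun y => innerSL ℝ (A y)) (by fun_prop) hg
  rw [funext magEnergy_eq_sum_norm_magDeriv_sq]
  fun_prop

lemma magField_innerSL_single (hA : Differentiable ℝ A) (x : EuclideanSpace ℝ (Fin d))
    (j k : Fin d) :
    magField (fun y => innerSL ℝ (A y)) x (EuclideanSpace.single j 1) (EuclideanSpace.single k 1)
      = fderiv ℝ (fun y => A y k) x (EuclideanSpace.single j 1)
        - fderiv ℝ (fun y => A y j) x (EuclideanSpace.single k 1) := by
  have hdA := (hA x).hasFDerivAt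
  have hcoord : ∀ i, fderiv ℝ (fun y => A y i) x
      = (EuclideanSpace.proj (𝕜 := ℝ) i).comp (fderiv ℝ A x) := fun i =>
    ((EuclideanSpace.proj (𝕜 := ℝ) i).hasFDerivAt.comp x hdA).fderiv
  have hpotential : fderiv ℝ (fun y => innerSL ℝ (A y)) x = (innerSL ℝ).comp (fderiv ℝ A x) :=
    ((innerSL ℝ).hasFDerivAt.comp x hdA).fderiv
  rw [magField, hpotential, hcoord, hcoord]
  simp [EuclideanSpace.inner_single_right]

lemma neg_finrank_euclideanSpace_lt (d : ℕ) :
    -(finrank ℝ (EuclideanSpace ℝ (Fin d)) : ℝ) < -((d : ℝ) - 2) := by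
  rw [finrank_euclideanSpace_fin]
  linarith

lemma isLocallyFiniteMeasure_normRpowMeasure_euclideanSpace (d : ℕ) [NeZero d] :
    IsLocallyFiniteMeasure
      (normRpowMeasure (volume : Measure (EuclideanSpace ℝ (Fin d))) (-((d : ℝ) - 2))) :=
  isLocallyFiniteMeasure_normRpowMeasure volume (neg_finrank_euclideanSpace_lt d)

lemma exists_setIntegral_norm_sq_mul_rpow_le_setIntegral_magEnergy (hd : 2 ≤ d)
    (hA : ContDiff ℝ 1 A) {x v w : EuclideanSpace ℝ (Fin d)} (hx : ‖x‖ < R)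
    (hB : magField (fun y => innerSL ℝ (A y)) x v w ≠ 0) :
    ∃ C, 0 < C ∧ ∀ g : EuclideanSpace ℝ (Fin d) → ℂ, ContDiff ℝ 2 g →
      ∫ x in ball 0 R, ‖g x‖ ^ 2 * ‖x‖ ^ (-((d : ℝ) - 2))
        ≤ C * ∫ x in ball 0 R, magEnergy d A g x * ‖x‖ ^ (-((d : ℝ) - 2)) := by
  have hd' : (2 : ℝ) ≤ d := by exact_mod_cast hd
  have : NeZero d := ⟨by lia⟩
  have := isLocallyFiniteMeasure_normRpowMeasure_euclideanSpace d
  obtain ⟨C, hC, hgap⟩ := exists_setIntegral_normRpowMeasure_norm_sq_le (μ := volume)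
    (α := fun y => innerSL ℝ (A y)) (neg_finrank_euclideanSpace_lt d) (by linarith)
    ((innerSL ℝ).contDiff.comp hA) hx hB
  refine ⟨C, hC, fun g hg => ?_⟩
  have hg1 : ContDiff ℝ 1 g := hg.of_le one_le_two
  have hD := continuous_magDeriv (α := fun y => innerSL ℝ (A y)) (by fun_prop) hg1
  simp only [← setIntegral_normRpowMeasure measurableSet_ball]
  refine (hgap g hg).trans (mul_le_mul_of_nonneg_left ?_ hC.le)
  exact setIntegral_mono (integrableOn_of_continuous_of_isBounded (by fun_prop) isBounded_ball)
    (integrableOn_of_continuous_of_isBounded (continuous_magEnergy hA.continuous hg1)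
      isBounded_ball) norm_magDeriv_sq_le_magEnergy

lemma setIntegral_norm_sq_mul_rpow_pos [NeZero d] (hg : Continuous g)
    (hne : ∃ x ∈ ball (0 : EuclideanSpace ℝ (Fin d)) R, g x ≠ 0) :
    0 < ∫ x in ball 0 R, ‖g x‖ ^ 2 * ‖x‖ ^ (-((d : ℝ) - 2)) := by
  have := isLocallyFiniteMeasure_normRpowMeasure_euclideanSpace d
  have := isOpenPosMeasure_normRpowMeasure (μ := (volume : Measure (EuclideanSpace ℝ (Fin d))))
    (-((d : ℝ) - 2))
  rw [← setIntegral_normRpowMeasure measurableSet_ball]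
  exact setIntegral_pos_of_isOpen_of_continuous (by fun_prop) (fun x => by positivity)
    isOpen_ball isBounded_ball (by simpa using hne)

lemma muB_pos_of_magField_ne_zero (hd : 2 ≤ d) (hA : ContDiff ℝ 1 A)
    {x v w : EuclideanSpace ℝ (Fin d)} (hx : ‖x‖ < R)
    (hB : magField (fun y => innerSL ℝ (A y)) x v w ≠ 0) : 0 < muB d A R := by
  have : NeZero d := ⟨by lia⟩
  obtain ⟨C, hC, hgap⟩ := exists_setIntegral_norm_sq_mul_rpow_le_setIntegral_magEnergy hd hA hx hB
  refine (inv_pos.2 hC).trans_le (le_csInf ⟨_, fun _ => 1, contDiff_const,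
    ⟨0, mem_ball_self ((norm_nonneg x).trans_lt hx), one_ne_zero⟩, rfl⟩ ?_)
  rintro q ⟨g, hg, hne, rfl⟩
  rw [le_div_iff₀ (setIntegral_norm_sq_mul_rpow_pos hg.continuous hne), inv_mul_le_iff₀ hC]
  exact hgap g (contDiff_infty.1 hg 2)

lemma muB_eq_zero_of_magField_eq_zero (hA : ContDiff ℝ (⊤ : ℕ∞) A)
    (hB : ∀ x v w, magField (fun y => innerSL ℝ (A y)) x v w = 0) (hR : 0 < R) :
    muB d A R = 0 := by
  obtain ⟨g, hg, hne, hDg⟩ := exists_magDeriv_eq_zero_of_magField_eq_zero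
    (α := fun y => innerSL ℝ (A y)) ((innerSL ℝ).contDiff.comp hA) hB
  have henergy : ∀ x, magEnergy d A g x = 0 := fun x => by
    simp [magEnergy_eq_sum_norm_magDeriv_sq, hDg]
  refine IsLeast.csInf_eq ⟨⟨g, hg, ⟨0, mem_ball_self hR, hne 0⟩, by simp [henergy]⟩, ?_⟩
  rintro q ⟨g, -, -, rfl⟩
  unfold magEnergy
  positivity

end RayleighQuotient

theorem stmt11 (d : ℕ) (hd : 2 ≤ d)
    (A : EuclideanSpace ℝ (Fin d) → EuclideanSpace ℝ (Fin d)) (hA : ContDiff ℝ (⊤ : ℕ∞) A) :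
    (∀ R > (0:ℝ), muB d A R = 0) ↔
    (∀ (x : EuclideanSpace ℝ (Fin d)) (j k : Fin d),
      fderiv ℝ (fun y => A y k) x (EuclideanSpace.single j (1:ℝ))
      - fderiv ℝ (fun y => A y j) x (EuclideanSpace.single k (1:ℝ)) = 0) := by
  have hfield := magField_innerSL_single (hA.differentiable (by simp))
  constructor
  · intro hμ x j k
    rw [← hfield]
    by_contra hB
    exact (muB_pos_of_magField_ne_zero hd (contDiff_infty.1 hA 1)
      (lt_add_one ‖x‖) hB).ne' (hμ _ (by positivity))
  · intro hB R hR
    refine muB_eq_zero_of_magField_eq_zero hA (fun x => magField_eq_zero_of_basis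
      (EuclideanSpace.basisFun (Fin d) ℝ).toBasis fun j k => ?_) hR
    simpa [hfield] using hB x j k
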